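/- Let f be a binary quartic with Δ(f) ≠ 0, let μ_{ij} be scalars with z_1^i z_2^j − μ_{ij}·H(f) ∈ J(f), and let A_f be the associated quartic of f. Then the Hessian determinant of A_f satisfies the polynomial identity 2⁸·3³·Δ(f)·H(A_f)(z_1,z_2) = −H(f)(−z_2, z_1), where H(f)(−z_2,z_1) denotes the polynomial obtained from H(f) by substituting (z_1,z_2) ↦ (−z_2,z_1). -/

import Mathlib

/-!
Write `h₀ = hess f / 144` and let `I₂`, `I₃`, `Δ` be the invariants of `f`.
Every binary quartic defines, through the apolar pairing, a linear functional on binary quartics.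
The twist `f(-z₂, z₁)` sends `zᵢ fⱼ / 4` to `I₂ δᵢⱼ`, and the twist `h₀(-z₂, z₁)` sends it to
`(3/2) I₃ δᵢⱼ`, so the combination

  `ψ = 3 I₃ ⟨f(-z₂, z₁), ·⟩ - 2 I₂ ⟨h₀(-z₂, z₁), ·⟩`

vanishes on the degree-four part of the Jacobian ideal (`psi_eq_zero_of_mem_jac`), while
`ψ (hess f) = -48 Δ` (`psi_hess`). Applying `ψ` to `z₁ⁱ z₂ʲ - μᵢⱼ hess f ∈ jac f` therefore gives
`-48 Δ μᵢⱼ = ψ (z₁ⁱ z₂ʲ)`. This determines the associated quartic, and the theorem becomes a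
polynomial identity in the coefficients of `f` for each of the five coefficients of the Hessian.
-/

open MvPolynomial

noncomputable section

/-- Binary forms: polynomials in two variables over ℂ. -/
abbrev P2 := MvPolynomial (Fin 2) ℂ

/-- The coefficient of `z_1^i z_2^j` in a binary form. -/
def cf (f : P2) (i j : ℕ) : ℂ :=
  coeff (Finsupp.single 0 i + Finsupp.single 1 j) f

/-- The invariant `I2(f) = ae − 4bd + 3c²` of a binary quartic
`f = a·z_1⁴ + 4b·z_1³z_2 + 6c·z_1²z_2² + 4d·z_1z_2³ + e·z_2⁴`. -/
def I2 (f : P2) : ℂ :=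
  cf f 4 0 * cf f 0 4 - 4 * (cf f 3 1 / 4) * (cf f 1 3 / 4) + 3 * (cf f 2 2 / 6) ^ 2

/-- The invariant `I3(f) = ace + 2bcd − ad² − b²e − c³` (the catalecticant). -/
def I3 (f : P2) : ℂ :=
  cf f 4 0 * (cf f 2 2 / 6) * cf f 0 4 +
    2 * (cf f 3 1 / 4) * (cf f 2 2 / 6) * (cf f 1 3 / 4) -
    cf f 4 0 * (cf f 1 3 / 4) ^ 2 - (cf f 3 1 / 4) ^ 2 * cf f 0 4 - (cf f 2 2 / 6) ^ 3

/-- The discriminant `Δ(f) = I2(f)³ − 27·I3(f)²` of a binary quartic. -/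
def disc (f : P2) : ℂ := I2 f ^ 3 - 27 * I3 f ^ 2

/-- The Hessian determinant `H(f) = f_{11}f_{22} − f_{12}²`. -/
def hess (f : P2) : P2 :=
  pderiv 0 (pderiv 0 f) * pderiv 1 (pderiv 1 f) - pderiv 0 (pderiv 1 f) ^ 2

/-- The Jacobian ideal `J(f) = (f_1, f_2)`. -/
def jac (f : P2) : Ideal P2 := Ideal.span {pderiv 0 f, pderiv 1 f}

/-- The binary quartic `a·z_1⁴ + 4b·z_1³z_2 + 6c·z_1²z_2² + 4d·z_1z_2³ + e·z_2⁴`. -/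
def quartic (a b c d e : ℂ) : P2 :=
  MvPolynomial.C a * X 0 ^ 4 + MvPolynomial.C (4 * b) * X 0 ^ 3 * X 1 +
    MvPolynomial.C (6 * c) * X 0 ^ 2 * X 1 ^ 2 + MvPolynomial.C (4 * d) * X 0 * X 1 ^ 3 +
    MvPolynomial.C e * X 1 ^ 4

/-- The associated quartic `A_f := Σ_{i+j=4} (24/(i!·j!))·μ_{ij}·z_1^i z_2^j`
built from scalars `μ_{ij}`. -/
def assocQuartic (μ : ℕ → ℕ → ℂ) : P2 :=
  ∑ i ∈ Finset.range 5,
    MvPolynomial.C ((24 : ℂ) / ((i.factorial : ℂ) * ((4 - i).factorial : ℂ))) *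
      MvPolynomial.C (μ i (4 - i)) * X 0 ^ i * X 1 ^ (4 - i)

/-- The substitution `(z_1, z_2) ↦ (−z_2, z_1)`, i.e. `g ↦ g(−z_2, z_1)`. -/
def twist (g : P2) : P2 := aeval ![-(X 1 : P2), X 0] g

/-- Multiplication by a term of bidegree `(k, l)` shifts coefficients by `(k, l)`. -/
lemma cf_mul_term (p : P2) (c : ℂ) (k l i j : ℕ) :
    cf (p * (MvPolynomial.C c * X 0 ^ k * X 1 ^ l)) i j =
      if k ≤ i ∧ l ≤ j then cf p (i - k) (j - l) * c else 0 := by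
  have hterm : (MvPolynomial.C c * X 0 ^ k * X 1 ^ l : P2) =
      monomial (Finsupp.single 0 k + Finsupp.single 1 l) c := by
    rw [X_pow_eq_monomial, X_pow_eq_monomial, C_mul_monomial, monomial_mul]
    simp
  have hle : (Finsupp.single 0 k + Finsupp.single 1 l : Fin 2 →₀ ℕ) ≤
      Finsupp.single 0 i + Finsupp.single 1 j ↔ k ≤ i ∧ l ≤ j := by
    simp [Finsupp.le_def, Fin.forall_fin_two]
  have hsub : (Finsupp.single 0 i + Finsupp.single 1 j : Fin 2 →₀ ℕ) -
      (Finsupp.single 0 k + Finsupp.single 1 l) =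
      Finsupp.single 0 (i - k) + Finsupp.single 1 (j - l) := by
    ext x
    fin_cases x <;> simp
  simp only [cf, hterm, coeff_mul_monomial', hle, hsub]

lemma cf_one (i j : ℕ) : cf 1 i j = if i = 0 ∧ j = 0 then 1 else 0 := by
  have h : (0 : Fin 2 →₀ ℕ) = Finsupp.single 0 i + Finsupp.single 1 j ↔ i = 0 ∧ j = 0 := by
    simp [Finsupp.ext_iff, Fin.forall_fin_two, eq_comm]
  simp only [cf, coeff_one, h]

lemma cf_term (c : ℂ) (k l i j : ℕ) :
    cf (MvPolynomial.C c * X 0 ^ k * X 1 ^ l) i j = if i = k ∧ j = l then c else 0 := by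
  rw [← one_mul (MvPolynomial.C c * X 0 ^ k * X 1 ^ l), cf_mul_term, cf_one]
  split_ifs <;> first | omega | simp

lemma cf_add (p q : P2) (i j : ℕ) : cf (p + q) i j = cf p i j + cf q i j := coeff_add ..

lemma cf_sub (p q : P2) (i j : ℕ) : cf (p - q) i j = cf p i j - cf q i j := coeff_sub ..

lemma cf_C_mul (c : ℂ) (p : P2) (i j : ℕ) : cf (MvPolynomial.C c * p) i j = c * cf p i j :=
  coeff_C_mul ..

/-- The binary cubic `p·z_1³ + q·z_1²z_2 + r·z_1z_2² + s·z_2³`. The exponents `0` and `1` are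
written out so that every summand has the shape treated by `cf_mul_term`. -/
def cubic (p q r s : ℂ) : P2 :=
  MvPolynomial.C p * X 0 ^ 3 * X 1 ^ 0 + MvPolynomial.C q * X 0 ^ 2 * X 1 ^ 1 +
    MvPolynomial.C r * X 0 ^ 1 * X 1 ^ 2 + MvPolynomial.C s * X 0 ^ 0 * X 1 ^ 3

lemma quartic_eq_terms (a b c d e : ℂ) :
    quartic a b c d e = MvPolynomial.C a * X 0 ^ 4 * X 1 ^ 0 +
      MvPolynomial.C (4 * b) * X 0 ^ 3 * X 1 ^ 1 + MvPolynomial.C (6 * c) * X 0 ^ 2 * X 1 ^ 2 +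
      MvPolynomial.C (4 * d) * X 0 ^ 1 * X 1 ^ 3 + MvPolynomial.C e * X 0 ^ 0 * X 1 ^ 4 := by
  simp [quartic]

lemma pderiv_zero_quartic (a b c d e : ℂ) :
    pderiv 0 (quartic a b c d e) = cubic (4 * a) (12 * b) (12 * c) (4 * d) := by
  simp only [quartic, cubic, map_add, Derivation.leibniz, Derivation.leibniz_pow, pderiv_C,
    pderiv_X]
  simp
  simp only [map_ofNat]
  ring

lemma pderiv_one_quartic (a b c d e : ℂ) :
    pderiv 1 (quartic a b c d e) = cubic (4 * b) (12 * c) (12 * d) (4 * e) := by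
  simp only [quartic, cubic, map_add, Derivation.leibniz, Derivation.leibniz_pow, pderiv_C,
    pderiv_X]
  simp
  simp only [map_ofNat]
  ring

lemma pderiv_zero_cubic (p q r s : ℂ) : pderiv 0 (cubic p q r s) =
    MvPolynomial.C (3 * p) * X 0 ^ 2 + MvPolynomial.C (2 * q) * X 0 * X 1 +
      MvPolynomial.C r * X 1 ^ 2 := by
  simp only [cubic, map_add, Derivation.leibniz, Derivation.leibniz_pow, pderiv_C,
    pderiv_X, map_mul, map_ofNat, smul_eq_mul, nsmul_eq_mul]
  simp
  ring

lemma pderiv_one_cubic (p q r s : ℂ) : pderiv 1 (cubic p q r s) =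
    MvPolynomial.C q * X 0 ^ 2 + MvPolynomial.C (2 * r) * X 0 * X 1 +
      MvPolynomial.C (3 * s) * X 1 ^ 2 := by
  simp only [cubic, map_add, Derivation.leibniz, Derivation.leibniz_pow, pderiv_C,
    pderiv_X, map_mul, map_ofNat, smul_eq_mul, nsmul_eq_mul]
  simp
  ring

/-- The Hessian of a binary quartic is again a binary quartic. -/
lemma hess_quartic (a b c d e : ℂ) :
    hess (quartic a b c d e) = quartic (144 * (a * c - b ^ 2)) (72 * (a * d - b * c))
      (24 * (a * e + 2 * b * d - 3 * c ^ 2)) (72 * (b * e - c * d)) (144 * (c * e - d ^ 2)) := by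
  rw [hess, pderiv_zero_quartic, pderiv_one_quartic, pderiv_zero_cubic, pderiv_one_cubic,
    pderiv_zero_cubic]
  simp only [quartic, map_add, map_sub, map_mul, map_pow, map_ofNat]
  ring

lemma twist_quartic (a b c d e : ℂ) :
    twist (quartic a b c d e) = quartic e (-d) c (-b) a := by
  simp only [twist, quartic, map_add, map_mul, map_pow, aeval_X, map_neg, aeval_C,
    algebraMap_eq, map_ofNat, Matrix.cons_val_zero, Matrix.cons_val_one]
  ring

lemma C_mul_quartic (t a b c d e : ℂ) : MvPolynomial.C t * quartic a b c d e =
    quartic (t * a) (t * b) (t * c) (t * d) (t * e) := by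
  simp only [quartic, map_mul]
  ring

lemma neg_quartic (a b c d e : ℂ) :
    -quartic a b c d e = quartic (-a) (-b) (-c) (-d) (-e) := by
  simp only [quartic, map_mul, map_neg]
  ring

/-- The weights `24/(i!·j!)` are the binomial coefficients, so the `μ i j` are the normalised
coefficients of the associated quartic. -/
lemma assocQuartic_eq (μ : ℕ → ℕ → ℂ) :
    assocQuartic μ = quartic (μ 4 0) (μ 3 1) (μ 2 2) (μ 1 3) (μ 0 4) := by
  have h4 : (24 : ℂ) / 6 = 4 := by norm_num
  have h6 : (24 : ℂ) / (2 * 2) = 6 := by norm_num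
  simp [assocQuartic, quartic, Finset.sum_range_succ, Nat.factorial, h4, h6]
  ring

lemma disc_quartic (a b c d e : ℂ) :
    disc (quartic a b c d e) = (a * e - 4 * b * d + 3 * c ^ 2) ^ 3 -
      27 * (a * c * e + 2 * b * c * d - a * d ^ 2 - b ^ 2 * e - c ^ 3) ^ 2 := by
  simp only [disc, I2, I3, quartic_eq_terms, cf_add, cf_term]
  norm_num

/-- The functional `ψ = 3 I₃ ⟨f(-z₂, z₁), ·⟩ - 2 I₂ ⟨h₀(-z₂, z₁), ·⟩` on binary quartics, where
`f = quartic a b c d e`, `h₀ = hess f / 144`, and `⟨quartic m₄ m₃ m₂ m₁ m₀, g⟩` is the apolar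
pairing `∑ mᵢ · cf g i (4 - i)`. Only the coefficients of degree four of `g` enter. -/
def psi (a b c d e : ℂ) (g : P2) : ℂ :=
  3 * (a * c * e + 2 * b * c * d - a * d ^ 2 - b ^ 2 * e - c ^ 3) *
    (e * cf g 4 0 - d * cf g 3 1 + c * cf g 2 2 - b * cf g 1 3 + a * cf g 0 4) -
  2 * (a * e - 4 * b * d + 3 * c ^ 2) *
    ((c * e - d ^ 2) * cf g 4 0 - (b * e - c * d) / 2 * cf g 3 1 +
      (a * e + 2 * b * d - 3 * c ^ 2) / 6 * cf g 2 2 - (a * d - b * c) / 2 * cf g 1 3 +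
      (a * c - b ^ 2) * cf g 0 4)

lemma psi_sub_C_mul (a b c d e t : ℂ) (g h : P2) :
    psi a b c d e (g - MvPolynomial.C t * h) = psi a b c d e g - t * psi a b c d e h := by
  simp only [psi, cf_sub, cf_C_mul]
  ring

/-- `ψ` sees only the degree-four part of `p f₁ + q f₂`, which comes from the linear parts of `p`
and `q`; there the contributions `3 I₃ · I₂ δᵢⱼ` and `2 I₂ · (3/2) I₃ δᵢⱼ` cancel. -/
lemma psi_eq_zero_of_mem_jac (a b c d e : ℂ) (g : P2) (hg : g ∈ jac (quartic a b c d e)) :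
    psi a b c d e g = 0 := by
  obtain ⟨p, q, rfl⟩ := Ideal.mem_span_pair.mp hg
  rw [pderiv_zero_quartic, pderiv_one_quartic]
  simp only [psi, cubic, mul_add, cf_add, cf_mul_term]
  norm_num
  ring

lemma psi_hess (a b c d e : ℂ) :
    psi a b c d e (hess (quartic a b c d e)) = -48 * disc (quartic a b c d e) := by
  rw [hess_quartic, disc_quartic]
  simp only [psi, quartic_eq_terms, cf_add, cf_term]
  norm_num
  ring

/-- The functional `psi` computes the scalars `μ i j` up to the nonzero factor `-48 Δ`. -/
lemma disc_mul_eq_psi (a b c d e m : ℂ) (i j : ℕ)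
    (h : X 0 ^ i * X 1 ^ j - MvPolynomial.C m * hess (quartic a b c d e) ∈
      jac (quartic a b c d e)) :
    -48 * disc (quartic a b c d e) * m =
      psi a b c d e (MvPolynomial.C 1 * X 0 ^ i * X 1 ^ j) := by
  have h0 := psi_eq_zero_of_mem_jac a b c d e _ h
  rw [psi_sub_C_mul, psi_hess] at h0
  rw [map_one, one_mul]
  linear_combination -h0

/-- the Hessian of the associated quartic:
`2⁸·3³·Δ(f)·H(A_f)(z_1,z_2) = −H(f)(−z_2,z_1)`. -/
theorem hessian_of_assoc_quartic (a b c d e : ℂ) (f : P2)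
    (hf : f = quartic a b c d e) (hΔ : disc f ≠ 0)
    (μ : ℕ → ℕ → ℂ)
    (hμ : ∀ i j : ℕ, i + j = 4 →
      X 0 ^ i * X 1 ^ j - MvPolynomial.C (μ i j) * hess f ∈ jac f) :
    MvPolynomial.C (2 ^ 8 * 3 ^ 3 * disc f) * hess (assocQuartic μ) =
      -twist (hess f) := by
  subst hf
  have h40 := disc_mul_eq_psi a b c d e _ 4 0 (hμ 4 0 rfl)
  have h31 := disc_mul_eq_psi a b c d e _ 3 1 (hμ 3 1 rfl)
  have h22 := disc_mul_eq_psi a b c d e _ 2 2 (hμ 2 2 rfl)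
  have h13 := disc_mul_eq_psi a b c d e _ 1 3 (hμ 1 3 rfl)
  have h04 := disc_mul_eq_psi a b c d e _ 0 4 (hμ 0 4 rfl)
  simp only [psi, cf_term] at h40 h31 h22 h13 h04
  norm_num [-neg_mul] at h40 h31 h22 h13 h04
  rw [assocQuartic_eq, hess_quartic, hess_quartic, twist_quartic, C_mul_quartic, neg_quartic]
  have hD := disc_quartic a b c d e
  generalize disc (quartic a b c d e) = D at *
  have h48 : -48 * D ≠ 0 := mul_ne_zero (by norm_num) hΔ
  have e40 : μ 4 0 = _ := eq_div_of_mul_eq h48 ((mul_comm _ _).trans h40)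
  have e31 : μ 3 1 = _ := eq_div_of_mul_eq h48 ((mul_comm _ _).trans h31)
  have e22 : μ 2 2 = _ := eq_div_of_mul_eq h48 ((mul_comm _ _).trans h22)
  have e13 : μ 1 3 = _ := eq_div_of_mul_eq h48 ((mul_comm _ _).trans h13)
  have e04 : μ 0 4 = _ := eq_div_of_mul_eq h48 ((mul_comm _ _).trans h04)
  -- Clearing denominators leaves one factor `D` on the right, to be expanded by `hD`.
  rw [e40, e31, e22, e13, e04]
  congr 1
  all_goals
    field_simp
    rw [hD]
    ring

end
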